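/- (Minimality of the constructed family, two-dimensional case.) Let q_1 < q_2 < ⋯ < q_L be pairwise coprime positive integers with q_1 > 1, and consider the 2L matrices M_{i,1} = [[q_i, 0], [1, q_i]] and M_{i,2} = [[q_i, 1], [0, q_i]], 1 ≤ i ≤ L. For any choice of indices i_0 ∈ {1,…,L} and j_0 ∈ {1,2}, there exists a nonsingular 2×2 integer matrix A that is a common right multiple of the remaining 2L−1 matrices {M_{i,j} : (i,j) ≠ (i_0,j_0)} and satisfies |det A| < (q_1·q_2⋯q_L)⁴. In particular, any least common right multiple of the remaining 2L−1 matrices has determinant absolute value strictly smaller than (q_1·q_2⋯q_L)⁴ = |det R_2|. -/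

import Mathlib

/-- The `D × D` integer matrix `M(q, σ)`: diagonal entries all `q`, entry
`(σ(k), σ(k+1))` equal to `1` for `k = 1, …, D-1`, all other entries `0`. -/
def Mmat {D : ℕ} (q : ℤ) (σ : Equiv.Perm (Fin D)) : Matrix (Fin D) (Fin D) ℤ :=
  Matrix.diagonal (fun _ => q) +
    ∑ k : Fin (D - 1),
      Matrix.single (σ ⟨(k : ℕ), by have := k.isLt; omega⟩)
        (σ ⟨(k : ℕ) + 1, by have := k.isLt; omega⟩) (1 : ℤ)

/-- Two square integer matrices are left coprime if every common left divisor of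
them is unimodular. -/
def LeftCoprime {D : ℕ} (M N : Matrix (Fin D) (Fin D) ℤ) : Prop :=
  ∀ A : Matrix (Fin D) (Fin D) ℤ, A.det ≠ 0 →
    (∃ B, M = A * B) → (∃ C, N = A * C) → (A.det = 1 ∨ A.det = -1)

/-- `A` is a right multiple of `M` if `A = M * P` for some nonsingular integer
matrix `P`. -/
def IsRightMultiple {D : ℕ} (A M : Matrix (Fin D) (Fin D) ℤ) : Prop :=
  ∃ P : Matrix (Fin D) (Fin D) ℤ, P.det ≠ 0 ∧ A = M * P

/-- The family of `2 × 2` matrices: `M_{i,1} = [[q_i, 0], [1, q_i]]` and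
`M_{i,2} = [[q_i, 1], [0, q_i]]` (here `j = 0` encodes `j = 1`, `j = 1` encodes `j = 2`). -/
def M2fam {L : ℕ} (q : Fin L → ℤ) (i : Fin L) (j : Fin 2) : Matrix (Fin 2) (Fin 2) ℤ :=
  if j = 0 then !![q i, 0; 1, q i] else !![q i, 1; 0, q i]

theorem det_M2fam {L : ℕ} (q : Fin L → ℤ) (i : Fin L) (j : Fin 2) :
    (M2fam q i j).det = q i ^ 2 := by
  unfold M2fam
  split_ifs <;> simp [Matrix.det_fin_two_of, sq]

theorem isRightMultiple_of_eq_mul {D : ℕ} {A M P : Matrix (Fin D) (Fin D) ℤ}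
    (hA : A.det ≠ 0) (h : A = M * P) : IsRightMultiple A M :=
  ⟨P, fun hP => hA (by rw [h, Matrix.det_mul, hP, mul_zero]), h⟩

theorem isRightMultiple_smul_of_det_dvd {D : ℕ} {c : ℤ} {M N : Matrix (Fin D) (Fin D) ℤ}
    (h0 : (c • N).det ≠ 0) (h : M.det ∣ c) : IsRightMultiple (c • N) M := by
  obtain ⟨d, rfl⟩ := h
  refine isRightMultiple_of_eq_mul (P := d • (M.adjugate * N)) h0 ?_
  rw [Matrix.mul_smul, ← Matrix.mul_assoc, Matrix.mul_adjugate, Matrix.smul_mul,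
    Matrix.one_mul, smul_smul, mul_comm]

theorem IsRightMultiple.abs_det_le {D : ℕ} {A M : Matrix (Fin D) (Fin D) ℤ}
    (h : IsRightMultiple A M) : |M.det| ≤ |A.det| := by
  obtain ⟨P, hP, rfl⟩ := h
  rw [Matrix.det_mul, abs_mul]
  exact le_mul_of_one_le_right (abs_nonneg _) (Int.one_le_abs hP)

/-- removing any one matrix from the constructed two-dimensional
family yields a family possessing a nonsingular common right multiple `A` with
`|det A| < (q_1⋯q_L)⁴`; in particular every least common right multiple of the
remaining `2L - 1` matrices has determinant absolute value `< (q_1⋯q_L)⁴`. -/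
theorem stmt_16 (L : ℕ) (hL : 1 ≤ L) (q : Fin L → ℤ) (hmono : StrictMono q)
    (hpos : ∀ i, 0 < q i) (hq1 : 1 < q ⟨0, hL⟩)
    (hcop : ∀ i i' : Fin L, i ≠ i' → IsCoprime (q i) (q i'))
    (i₀ : Fin L) (j₀ : Fin 2) :
    (∃ A : Matrix (Fin 2) (Fin 2) ℤ, A.det ≠ 0 ∧
      (∀ (i : Fin L) (j : Fin 2), (i, j) ≠ (i₀, j₀) → IsRightMultiple A (M2fam q i j)) ∧
      |A.det| < (∏ i, q i) ^ 4) ∧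
    ∀ R : Matrix (Fin 2) (Fin 2) ℤ, R.det ≠ 0 →
      (∀ (i : Fin L) (j : Fin 2), (i, j) ≠ (i₀, j₀) → IsRightMultiple R (M2fam q i j)) →
      (∀ R' : Matrix (Fin 2) (Fin 2) ℤ, R'.det ≠ 0 →
        (∀ (i : Fin L) (j : Fin 2), (i, j) ≠ (i₀, j₀) → IsRightMultiple R' (M2fam q i j)) →
        IsRightMultiple R' R) →
      |R.det| < (∏ i, q i) ^ 4 := by
  have hgt : 1 < q i₀ := hq1.trans_le (hmono.monotone (Fin.mk_le_of_le_val (Nat.zero_le _)))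
  obtain ⟨A, hA, hcrm, hlt⟩ : ∃ A : Matrix (Fin 2) (Fin 2) ℤ, A.det ≠ 0 ∧
      (∀ (i : Fin L) (j : Fin 2), (i, j) ≠ (i₀, j₀) → IsRightMultiple A (M2fam q i j)) ∧
      |A.det| < (∏ i, q i) ^ 4 := by
    set K := ∏ i ∈ Finset.univ.erase i₀, q i
    have hKpos : 0 < K := Finset.prod_pos fun i _ => hpos i
    have hprod : ∏ i, q i = q i₀ * K :=
      (Finset.mul_prod_erase Finset.univ q (Finset.mem_univ i₀)).symm
    have hdet : (K ^ 2 • M2fam q i₀ (1 - j₀)).det = K ^ 4 * q i₀ ^ 2 := by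
      rw [Matrix.det_smul, det_M2fam, Fintype.card_fin]
      ring
    have hdet_pos : 0 < (K ^ 2 • M2fam q i₀ (1 - j₀)).det := by
      rw [hdet]
      have := hpos i₀
      positivity
    refine ⟨_, hdet_pos.ne', fun i j hij => ?_, ?_⟩
    · by_cases hi : i = i₀
      · subst hi
        have hj : 1 - j₀ = j := by
          have : j ≠ j₀ := fun h => hij (by rw [h])
          omega
        refine isRightMultiple_of_eq_mul (P := K ^ 2 • 1) hdet_pos.ne' ?_
        rw [hj, Matrix.mul_smul, Matrix.mul_one]
      · refine isRightMultiple_smul_of_det_dvd hdet_pos.ne' ?_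
        rw [det_M2fam]
        exact pow_dvd_pow_of_dvd
          (Finset.dvd_prod_of_mem q (Finset.mem_erase.2 ⟨hi, Finset.mem_univ i⟩)) 2
    · rw [abs_of_pos hdet_pos, hdet, hprod, mul_pow, mul_comm]
      exact mul_lt_mul_of_pos_right (pow_lt_pow_right₀ hgt (by norm_num)) (by positivity)
  exact ⟨⟨A, hA, hcrm, hlt⟩, fun R _ _ hleast => (hleast A hA hcrm).abs_det_le.trans_lt hlt⟩
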